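/- There exists a countable set D of excursions (lower semicontinuous functions h : [0,1] → [0,∞) with h(0) = 0) such that for every excursion h and every ε > 0, there is g ∈ D with d_Γ(h,g) + d_λ(h,g) < ε, where d_Γ is the Hausdorff distance between epigraphs in ℝ² and d_λ(h,g) = inf{ε > 0 : Leb{t : |h(t) − g(t)| > ε} < ε}. That is, the space of excursions equipped with the excursion metric d_ex = d_Γ + d_λ is separable. -/

import Mathlib

open MeasureTheory

/-- The epigraph `epi(h) = {(t, y) ∈ [0,1] × [0,∞) : y ≥ h(t)}` of `h : [0,1] → [0,∞)`,
viewed as a subset of `ℝ²`. -/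
def epigraph (h : unitInterval → ℝ) : Set (ℝ × ℝ) :=
  {p | ∃ t : unitInterval, (t : ℝ) = p.1 ∧ 0 ≤ p.2 ∧ h t ≤ p.2}

/-- The Ky Fan metric `d_λ(h, g) = inf {ε > 0 : Leb{t : |h(t) - g(t)| > ε} < ε}`
for convergence in Lebesgue measure. -/
noncomputable def kyFanDist (h g : unitInterval → ℝ) : ℝ :=
  sInf {ε : ℝ | 0 < ε ∧ volume {t : unitInterval | ε < |h t - g t|} < ENNReal.ofReal ε}

/-- Lipschitz regularization. -/
noncomputable def lipReg (h : unitInterval → ℝ) (n : ℕ) (t : unitInterval) : ℝ :=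
  ⨅ s : unitInterval, (h s + n * dist t s)

theorem lipReg_bdd (h : unitInterval → ℝ) (h0 : ∀ t, 0 ≤ h t) (n : ℕ) (t : unitInterval) :
    BddBelow (Set.range fun s : unitInterval => h s + n * dist t s) := by
  refine ⟨0, ?_⟩
  rintro _ ⟨s, rfl⟩
  have := h0 s
  positivity

theorem lipReg_le (h : unitInterval → ℝ) (h0 : ∀ t, 0 ≤ h t) (n : ℕ) (t s : unitInterval) :
    lipReg h n t ≤ h s + n * dist t s := ciInf_le (lipReg_bdd h h0 n t) s

theorem lipReg_nonneg (h : unitInterval → ℝ) (h0 : ∀ t, 0 ≤ h t) (n : ℕ) (t : unitInterval) :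
    0 ≤ lipReg h n t := by
  refine le_ciInf fun s => ?_
  have := h0 s
  positivity

theorem lipReg_le_self (h : unitInterval → ℝ) (h0 : ∀ t, 0 ≤ h t) (n : ℕ) (t : unitInterval) :
    lipReg h n t ≤ h t := by
  simpa using lipReg_le h h0 n t t

theorem lipReg_continuous (h : unitInterval → ℝ) (h0 : ∀ t, 0 ≤ h t) (n : ℕ) :
    Continuous (lipReg h n) := by
  have : LipschitzWith (n : NNReal) (lipReg h n) := by
    refine LipschitzWith.of_le_add_mul _ fun x y => ?_
    rw [← sub_le_iff_le_add]
    refine le_ciInf fun s => ?_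
    have h1 := lipReg_le h h0 n x s
    have h2 : (n : ℝ) * dist x s ≤ n * (dist x y + dist y s) :=
      mul_le_mul_of_nonneg_left (dist_triangle x y s) (Nat.cast_nonneg n)
    have h3 : (((n : NNReal)) : ℝ) = (n : ℝ) := by simp
    rw [h3]
    linarith
  exact this.continuous

theorem lipReg_tendsto (h : unitInterval → ℝ) (h0 : ∀ t, 0 ≤ h t) (hl : LowerSemicontinuous h)
    (t : unitInterval) : Filter.Tendsto (fun n => lipReg h n t) Filter.atTop (nhds (h t)) := by
  rw [Metric.tendsto_atTop]
  intro ε hε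
  obtain ⟨r, hr, hb⟩ := Metric.eventually_nhds_iff.1 (hl t (h t - ε / 2) (by linarith))
  obtain ⟨N, hN⟩ := exists_nat_gt (h t / r)
  refine ⟨N, fun n hn => ?_⟩
  have h1 := lipReg_le_self h h0 n t
  have h2 : h t - ε / 2 ≤ lipReg h n t := by
    refine le_ciInf fun s => ?_
    by_cases hs : dist s t < r
    · have := hb hs
      have h3 : 0 ≤ (n : ℝ) * dist t s := by positivity
      linarith
    · rw [dist_comm] at hs
      have h4 : (N : ℝ) ≤ n := by exact_mod_cast hn
      have h5 : h t < N * r := (div_lt_iff₀ hr).1 hN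
      have h6 : (N : ℝ) * r ≤ n * dist t s :=
        mul_le_mul h4 (not_lt.1 hs) hr.le (Nat.cast_nonneg n)
      have := h0 s
      linarith
  rw [Real.dist_eq, abs_lt]
  constructor <;> linarith

/-- The space of excursions (lower semicontinuous `h : [0,1] → [0,∞)` with
`h(0) = 0`), equipped with the excursion metric `d_ex = d_Γ + d_λ`, is separable: there is a
countable set `D` of excursions such that every excursion is within `ε` of some member of `D`
in `d_ex`, for every `ε > 0`. -/
theorem excursions_separable :
    ∃ D : Set (unitInterval → ℝ), D.Countable ∧
      (∀ g ∈ D, LowerSemicontinuous g ∧ g 0 = 0 ∧ ∀ t, 0 ≤ g t) ∧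
      ∀ h : unitInterval → ℝ, LowerSemicontinuous h → h 0 = 0 → (∀ t, 0 ≤ h t) →
        ∀ ε : ℝ, 0 < ε → ∃ g ∈ D,
          Metric.hausdorffDist (epigraph h) (epigraph g) + kyFanDist h g < ε := by
  let S : Set C(unitInterval, ℝ) := {f | f 0 = 0 ∧ ∀ t, 0 ≤ f t}
  obtain ⟨C, hCS, hCc, hCd⟩ :=
    (TopologicalSpace.IsSeparable.of_separableSpace S).exists_countable_dense_subset
  refine ⟨Set.image (fun f : C(unitInterval, ℝ) => (f : unitInterval → ℝ)) C, hCc.image _, ?_, ?_⟩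
  · rintro _ ⟨f, hf, rfl⟩
    exact ⟨f.continuous.lowerSemicontinuous, (hCS hf).1, (hCS hf).2⟩
  intro h hl hz h0 ε hε
  obtain ⟨δ, hδ, hδε⟩ : ∃ δ : ℝ, 0 < δ ∧ 4 * δ < ε := ⟨ε / 5, by linarith, by linarith⟩
  obtain ⟨T, -, hTf, hTc⟩ := (isCompact_univ (X := unitInterval)).finite_cover_balls hδ
  obtain ⟨M, hM⟩ := (hTf.image h).bddAbove
  have hmeas := tendstoInMeasure_of_tendsto_ae (μ := (volume : Measure unitInterval))
    (f := lipReg h) (g := h)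
    (fun n => (lipReg_continuous h h0 n).aestronglyMeasurable)
    (Filter.Eventually.of_forall (lipReg_tendsto h h0 hl))
  rw [tendstoInMeasure_iff_dist] at hmeas
  have hev := (hmeas δ hδ).eventually_lt_const
    (show (0 : ENNReal) < ENNReal.ofReal (2 * δ) by simpa using hδ)
  obtain ⟨K, hK⟩ := exists_nat_gt ((M + 2 * δ) / δ)
  obtain ⟨n, hn1, hn2⟩ := (hev.and (Filter.eventually_ge_atTop (K + 1))).exists
  have hnK : M + 2 * δ < n * δ := by
    have h1 : (K : ℝ) ≤ n := by exact_mod_cast (by omega : K ≤ n)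
    have h2 := (div_lt_iff₀ hδ).1 hK
    nlinarith
  have hnpos : (0 : ℝ) < n := by exact_mod_cast (by omega : 0 < n)
  let F : C(unitInterval, ℝ) := ⟨lipReg h n, lipReg_continuous h h0 n⟩
  have hFS : F ∈ S := by
    refine ⟨le_antisymm ?_ (lipReg_nonneg h h0 n 0), lipReg_nonneg h h0 n⟩
    rw [← hz]
    exact lipReg_le_self h h0 n 0
  obtain ⟨g, hgC, hgF⟩ := Metric.mem_closure_iff.1 (hCd hFS) δ hδ
  have hgd : ∀ t, |lipReg h n t - g t| < δ := fun t =>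
    lt_of_le_of_lt (ContinuousMap.dist_apply_le_dist (f := F) (g := g) t) hgF
  refine ⟨g, ⟨g, hgC, rfl⟩, ?_⟩
  have hH : Metric.hausdorffDist (epigraph h) (epigraph g) ≤ 2 * δ := by
    refine Metric.hausdorffDist_le_of_mem_dist (by positivity) ?_ ?_
    · rintro ⟨x, y⟩ ⟨t, ht, hy, hty⟩
      simp only at ht hy hty
      refine ⟨(x, y + δ), ⟨t, ht, ?_, ?_⟩, ?_⟩
      · show 0 ≤ y + δ
        linarith
      · have h1 := lipReg_le_self h h0 n t
        have h2 := abs_lt.1 (hgd t)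
        show g t ≤ y + δ
        linarith
      · simp only [Prod.dist_eq, dist_self, Real.dist_eq]
        refine max_le (by linarith) (abs_le.2 ⟨?_, ?_⟩) <;> linarith
    · rintro ⟨x, y⟩ ⟨t, ht, hy, hty⟩
      simp only at ht hy hty
      by_cases hyM : M ≤ y
      · have := hTc (Set.mem_univ t)
        simp only [Set.mem_iUnion, Metric.mem_ball, exists_prop] at this
        obtain ⟨s, hs, hts⟩ := this
        refine ⟨((s : ℝ), y), ⟨s, rfl, hy, (hM ⟨s, hs, rfl⟩).trans hyM⟩, ?_⟩
        simp only [Prod.dist_eq, dist_self]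
        rw [← ht]
        refine max_le ?_ (by linarith)
        rw [← Subtype.dist_eq]
        linarith
      · obtain ⟨s, hs⟩ := exists_lt_of_ciInf_lt
          (show (⨅ s : unitInterval, (h s + n * dist t s)) < y + 2 * δ by
            have h2 := abs_lt.1 (hgd t)
            unfold lipReg at h2
            linarith)
        have h3 : 0 ≤ (n : ℝ) * dist t s := by positivity
        have h4 := h0 s
        refine ⟨((s : ℝ), y + 2 * δ), ⟨s, rfl, ?_, ?_⟩, ?_⟩
        · show 0 ≤ y + 2 * δ
          linarith
        · show h s ≤ y + 2 * δ
          linarith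
        · simp only [Prod.dist_eq]
          rw [← ht]
          refine max_le ?_ ?_
          · rw [← Subtype.dist_eq]
            have : dist t s < δ := lt_of_mul_lt_mul_left (by linarith) hnpos.le
            linarith
          · rw [Real.dist_eq]
            refine abs_le.2 ⟨?_, ?_⟩ <;> linarith
  have hKF : kyFanDist h g ≤ 2 * δ := by
    refine csInf_le ⟨0, fun x hx => hx.1.le⟩ ⟨by positivity, lt_of_le_of_lt (measure_mono ?_) hn1⟩
    intro t ht
    simp only [Set.mem_ofPred_eq] at ht ⊢
    have h1 := hgd t
    have h2 := abs_sub_le (h t) (lipReg h n t) (g t)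
    rw [dist_comm, Real.dist_eq]
    linarith
  linarith
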